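/- Let τ : ℝ² → ℝ be a smooth function with ‖∇τ(x)‖ equal to a constant strictly less than 1 for all x ∈ ℝ² (Euclidean norm), let a > 0, and let γ₀(t) = (a cos t, a sin t). Define the Randers length of an admissible closed curve γ by L(γ) = ∫₀^{2π} (‖γ'(t)‖ + ⟨∇τ(γ(t)), γ'(t)⟩) dt. Then there exists ε > 0 such that every admissible closed curve γ : [0,2π] → ℝ² with sup_{t∈[0,2π]} ‖γ(t) − γ₀(t)‖ < ε and L(γ) = L(γ₀) satisfies A(γ) ≤ A(γ₀) = πa². -/

import Mathlib

/-!
The exact part of the metric integrates to `τ(γ(2π)) - τ(γ(0)) = 0` over a closed curve, so the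
Randers length is the Euclidean length and the claim follows from the isoperimetric inequality
`A ≤ L² / (4π)`, which holds for all admissible closed curves; hence any `ε` works.

The isoperimetric inequality is proved by a regularised, parametrisation-free version of Lax's
argument. Cut the curve into two arcs of equal length `W = L / 2` and take Cartesian coordinates
`(x, y)` in which both cut points lie on the axis `y = 0`. Then `A = -∫ y x'` over the closed curve,
and it is enough that `∫ -y x' ≤ W² / (2π)` on each arc (`arc_bound`). Let `ψ` be an affine function
of arc length with values running from `δ` to `π - δ` along the arc, and let `m` be its rate, so that
`ψ' = m w` where `w` is the speed. By Cauchy-Schwarz and the inequality between the arithmetic and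
geometric means,
`-y x' + y y' cot ψ ≤ |y| w / sin ψ ≤ (m w y² / sin² ψ + w / m) / 2`,
that is, `-y x' ≤ w / (2 m) - (y² cot ψ / 2)'`. The last term integrates to zero because `y` vanishes
at both ends, which leaves `∫ -y x' ≤ W / (2 m) = W² / (2 (π - 2 δ))`; now let `δ → 0`.
-/

/-!
Statement 4 (Corollary 2): For the Randers metric `F = √((dx¹)²+(dx²)²) + dτ`, where
`τ : ℝ² → ℝ` is smooth with `‖∇τ‖` constant and `< 1`, the circle
`γ₀(t) = (a cos t, a sin t)` is a strong local maximizer of the signed area among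
admissible closed curves of the same Randers length.
-/

/-- Euclidean norm of a vector of `ℝ × ℝ`. -/
noncomputable def enorm2 (v : ℝ × ℝ) : ℝ := Real.sqrt (v.1 ^ 2 + v.2 ^ 2)

/-- The Euclidean gradient of `τ : ℝ × ℝ → ℝ`, as a pair of partial derivatives. -/
noncomputable def grad2 (τ : ℝ × ℝ → ℝ) (x : ℝ × ℝ) : ℝ × ℝ :=
  (fderiv ℝ τ x (1, 0), fderiv ℝ τ x (0, 1))

/-- An admissible closed curve: continuous on `[0, 2π]`, closed, and piecewise
continuously differentiable with respect to some partition of `[0, 2π]`. -/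
def IsAdmissible (γ : ℝ → ℝ × ℝ) : Prop :=
  ContinuousOn γ (Set.Icc 0 (2 * Real.pi)) ∧ γ 0 = γ (2 * Real.pi) ∧
  ∃ (k : ℕ) (p : ℕ → ℝ), 0 < k ∧ p 0 = 0 ∧ p k = 2 * Real.pi ∧
    (∀ i < k, p i < p (i + 1)) ∧
    (∀ i < k, ContDiffOn ℝ 1 γ (Set.Icc (p i) (p (i + 1))))

/-- The signed area enclosed by a closed curve `γ = (x¹, x²)`:
`A(γ) = (1/2) ∫₀^{2π} (x¹ ẋ² − x² ẋ¹) dt`. -/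
noncomputable def signedArea (γ : ℝ → ℝ × ℝ) : ℝ :=
  (1 / 2) * ∫ t in (0 : ℝ)..(2 * Real.pi),
    ((γ t).1 * (deriv γ t).2 - (γ t).2 * (deriv γ t).1)

/-- The Randers length `L(γ) = ∫₀^{2π} (‖γ'(t)‖ + ⟨∇τ(γ(t)), γ'(t)⟩) dt` of the
Randers metric `F = √((dx¹)²+(dx²)²) + dτ`. -/
noncomputable def randersLengthExact (τ : ℝ × ℝ → ℝ) (γ : ℝ → ℝ × ℝ) : ℝ :=
  ∫ t in (0 : ℝ)..(2 * Real.pi),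
    (enorm2 (deriv γ t) +
      ((grad2 τ (γ t)).1 * (deriv γ t).1 + (grad2 τ (γ t)).2 * (deriv γ t).2))

open MeasureTheory Set Filter Topology

theorem enorm2_continuous : Continuous enorm2 := by
  unfold enorm2; fun_prop

/-! ### The area bound for a single arc -/

/-- Cauchy-Schwarz for `(s, c)` and `(p, q)`, followed by the inequality of arithmetic and geometric
means with weight `m`. -/
theorem calibration_bound {z m w s c p q : ℝ} (hm : 0 < m) (hw : 0 ≤ w)
    (hsc : s ^ 2 + c ^ 2 = 1) (hpq : p ^ 2 + q ^ 2 ≤ w ^ 2) :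
    z * (s * p + c * q) ≤ (m * z ^ 2 * w + w / m) / 2 := by
  have h1 : |s * p + c * q| ≤ w := by
    apply abs_le_of_sq_le_sq _ hw
    nlinarith [sq_nonneg (s * q - c * p)]
  have h2 : z * (s * p + c * q) ≤ |z| * w := by
    calc z * (s * p + c * q) ≤ |z * (s * p + c * q)| := le_abs_self _
      _ = |z| * |s * p + c * q| := abs_mul _ _
      _ ≤ |z| * w := by gcongr
  have h3 : (m * z ^ 2 * w + w / m) / 2 - |z| * w = w / (2 * m) * (m * |z| - 1) ^ 2 := by
    rw [← sq_abs z]; field_simp; ring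
  have h4 : 0 ≤ w / (2 * m) * (m * |z| - 1) ^ 2 := by positivity
  linarith

/-- The bound on one arc before the limit `δ → 0`. The functions `x'`, `y'`, `w` play the roles of
the derivatives of the coordinates and of the speed, and `σ` is the arc length. -/
theorem arc_bound_delta {u v b W δ : ℝ} (huv : u ≤ v) {s : Set ℝ} (hs : s.Countable)
    {y σ x' y' w : ℝ → ℝ} (hy : ContinuousOn y (Icc u v)) (hσ : ContinuousOn σ (Icc u v))
    (hy' : ∀ t ∈ Ioo u v \ s, HasDerivAt y (y' t) t)
    (hσ' : ∀ t ∈ Ioo u v \ s, HasDerivAt σ (w t) t)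
    (ix : IntervalIntegrable x' volume u v) (iy : IntervalIntegrable y' volume u v)
    (iw : IntervalIntegrable w volume u v) (hw : ∀ t, 0 ≤ w t)
    (hxy : ∀ t, x' t ^ 2 + y' t ^ 2 ≤ w t ^ 2) (hyu : y u = 0) (hyv : y v = 0)
    (hW : 0 < W) (hσu : σ u = b) (hσv : σ v = b + W)
    (hσr : ∀ t ∈ Icc u v, σ t ∈ Icc b (b + W)) (hδ : 0 < δ) (hδ2 : δ < Real.pi / 2) :
    (∫ t in u..v, y t * x' t) * (2 * (Real.pi - 2 * δ)) ≤ W ^ 2 := by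
  set m := (Real.pi - 2 * δ) / W with hmdef
  have hm : 0 < m := by apply div_pos _ hW; linarith
  set ψ : ℝ → ℝ := fun t => δ + m * (σ t - b) with hψ
  have hψr : ∀ t ∈ Icc u v, 0 < Real.sin (ψ t) := by
    intro t ht
    obtain ⟨h1, h2⟩ := hσr t ht
    have h3 : m * (σ t - b) ≤ m * W := by
      apply mul_le_mul_of_nonneg_left _ hm.le; linarith
    have h4 : m * W = Real.pi - 2 * δ := by rw [hmdef]; field_simp
    have h5 : 0 ≤ m * (σ t - b) := mul_nonneg hm.le (by linarith)
    apply Real.sin_pos_of_pos_of_lt_pi <;> simp only [hψ] <;> linarith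
  have hψc : ContinuousOn ψ (Icc u v) := by fun_prop
  have hsin : ContinuousOn (fun t => Real.sin (ψ t)) (Icc u v) := by fun_prop
  have hcos : ContinuousOn (fun t => Real.cos (ψ t)) (Icc u v) := by fun_prop
  have hne : ∀ t ∈ Icc u v, Real.sin (ψ t) ≠ 0 := fun t ht => (hψr t ht).ne'
  set G : ℝ → ℝ := fun t => y t ^ 2 * Real.cos (ψ t) / Real.sin (ψ t) / 2 with hG
  set G' : ℝ → ℝ := fun t => y t * Real.cos (ψ t) / Real.sin (ψ t) * y' t
      - y t ^ 2 / Real.sin (ψ t) ^ 2 * m / 2 * w t with hG'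
  have hGc : ContinuousOn G (Icc u v) :=
    (((hy.pow 2).mul hcos).div hsin hne).div_const 2
  have hGd : ∀ t ∈ Ioo u v \ s, HasDerivAt G (G' t) t := by
    intro t ht
    have hn := hne t (Ioo_subset_Icc_self ht.1)
    have d1 : HasDerivAt ψ (m * w t) t := (((hσ' t ht).sub_const b).const_mul m).const_add δ
    have d2 := (((((hy' t ht).pow 2).mul d1.cos).div d1.sin hn).div_const 2)
    refine d2.congr_deriv ?_
    simp only [hG', Pi.mul_apply, Pi.pow_apply]
    field_simp
    linear_combination (-w t * m * y t ^ 2) * Real.sin_sq_add_cos_sq (ψ t)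
  have iG' : IntervalIntegrable G' volume u v := by
    apply IntervalIntegrable.sub
    · apply iy.continuousOn_mul
      rw [uIcc_of_le huv]
      exact (hy.mul hcos).div hsin hne
    · apply iw.continuousOn_mul
      rw [uIcc_of_le huv]
      exact ((((hy.pow 2).div (hsin.pow 2) (fun t ht => pow_ne_zero 2 (hne t ht))).mul_const
        m).div_const 2)
  have eG : ∫ t in u..v, G' t = 0 := by
    rw [integral_eq_of_hasDerivAt_off_countable_of_le G G' huv hs hGc hGd iG']
    simp [hG, hyu, hyv]
  have ew : ∫ t in u..v, w t = W := by
    rw [integral_eq_of_hasDerivAt_off_countable_of_le σ w huv hs hσ hσ' iw, hσu, hσv]; ring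
  have iyx : IntervalIntegrable (fun t => y t * x' t) volume u v := by
    apply ix.continuousOn_mul; rwa [uIcc_of_le huv]
  have key : ∫ t in u..v, y t * x' t ≤ ∫ t in u..v, ((1 / (2 * m)) * w t - G' t) := by
    apply intervalIntegral.integral_mono_on huv iyx ((iw.const_mul _).sub iG')
    intro t ht
    have hn := hne t ht
    have hb := calibration_bound (z := y t / Real.sin (ψ t)) hm (hw t)
      (Real.sin_sq_add_cos_sq (ψ t)) (hxy t)
    have e1 : y t / Real.sin (ψ t) * (Real.sin (ψ t) * x' t + Real.cos (ψ t) * y' t)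
        = y t * x' t + y t * Real.cos (ψ t) / Real.sin (ψ t) * y' t := by
      field_simp
    have e2 : (m * (y t / Real.sin (ψ t)) ^ 2 * w t + w t / m) / 2
        = y t ^ 2 / Real.sin (ψ t) ^ 2 * m / 2 * w t + 1 / (2 * m) * w t := by
      field_simp
    rw [e1, e2] at hb
    simp only [hG']
    linarith
  rw [intervalIntegral.integral_sub (iw.const_mul _) iG', eG,
    intervalIntegral.integral_const_mul, ew, sub_zero] at key
  have hpos : 0 < 2 * (Real.pi - 2 * δ) := by linarith
  calc _ ≤ (1 / (2 * m) * W) * (2 * (Real.pi - 2 * δ)) := by gcongr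
    _ = W ^ 2 := by
      have : Real.pi - 2 * δ ≠ 0 := by linarith
      rw [hmdef]; field_simp

/-- An arc of length `W` with both endpoints on a line, closed up along that line, encloses at most
the area of a half disc whose bounding semicircle has length `W`. -/
theorem arc_bound {u v b W : ℝ} (huv : u ≤ v) {s : Set ℝ} (hs : s.Countable)
    {y σ x' y' w : ℝ → ℝ} (hy : ContinuousOn y (Icc u v)) (hσ : ContinuousOn σ (Icc u v))
    (hy' : ∀ t ∈ Ioo u v \ s, HasDerivAt y (y' t) t)
    (hσ' : ∀ t ∈ Ioo u v \ s, HasDerivAt σ (w t) t)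
    (ix : IntervalIntegrable x' volume u v) (iy : IntervalIntegrable y' volume u v)
    (iw : IntervalIntegrable w volume u v) (hw : ∀ t, 0 ≤ w t)
    (hxy : ∀ t, x' t ^ 2 + y' t ^ 2 ≤ w t ^ 2) (hyu : y u = 0) (hyv : y v = 0)
    (hW : 0 < W) (hσu : σ u = b) (hσv : σ v = b + W)
    (hσr : ∀ t ∈ Icc u v, σ t ∈ Icc b (b + W)) :
    (∫ t in u..v, y t * x' t) * (2 * Real.pi) ≤ W ^ 2 := by
  have hlim : Tendsto (fun δ : ℝ => (∫ t in u..v, y t * x' t) * (2 * (Real.pi - 2 * δ)))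
      (𝓝[>] 0) (𝓝 ((∫ t in u..v, y t * x' t) * (2 * Real.pi))) := by
    have hc : Continuous
        (fun δ : ℝ => (∫ t in u..v, y t * x' t) * (2 * (Real.pi - 2 * δ))) := by fun_prop
    have := hc.tendsto 0
    simp only [mul_zero, sub_zero] at this
    exact this.mono_left nhdsWithin_le_nhds
  apply le_of_tendsto hlim
  filter_upwards [Ioo_mem_nhdsGT (show (0 : ℝ) < Real.pi / 2 by positivity)] with δ hδ
  exact arc_bound_delta huv hs hy hσ hy' hσ' ix iy iw hw hxy hyu hyv hW hσu hσv hσr hδ.1 hδ.2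

/-! ### Regularity of admissible curves and exact one-forms -/

theorem exists_partition_index (p : ℕ → ℝ) (k : ℕ) {t : ℝ} (h0 : p 0 < t) (hk : t < p k)
    (hne : ∀ i, t ≠ p i) : ∃ i < k, t ∈ Ioo (p i) (p (i + 1)) := by
  induction k with
  | zero => exact absurd h0 hk.not_gt
  | succ k ih =>
    rcases lt_or_gt_of_ne (hne k) with h | h
    · obtain ⟨i, hi, hti⟩ := ih h
      exact ⟨i, by omega, hti⟩
    · exact ⟨k, by omega, h, hk⟩

/-- Off the countable set of partition points an admissible curve is `C¹`, and its derivative is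
integrable. -/
theorem IsAdmissible.regularity {γ : ℝ → ℝ × ℝ} (h : IsAdmissible γ) :
    IntervalIntegrable (deriv γ) volume 0 (2 * Real.pi) ∧
    ∃ s : Set ℝ, s.Countable ∧ ∀ t ∈ Ioo 0 (2 * Real.pi) \ s,
      DifferentiableAt ℝ γ t ∧
      ∃ U : Set ℝ, IsOpen U ∧ t ∈ U ∧ ContinuousOn (deriv γ) U := by
  obtain ⟨-, -, k, p, -, p0, pk, hlt, hC⟩ := h
  refine ⟨?_, range p, countable_range p, ?_⟩
  · rw [← p0, ← pk]
    apply IntervalIntegrable.trans_iterate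
    intro i hi
    have hc := (hC i hi).continuousOn_derivWithin (uniqueDiffOn_Icc (hlt i hi)) le_rfl
    have hint : IntervalIntegrable (derivWithin γ (Icc (p i) (p (i + 1)))) volume
        (p i) (p (i + 1)) := by
      apply ContinuousOn.intervalIntegrable
      rwa [uIcc_of_le (hlt i hi).le]
    apply hint.congr_uIoo
    rw [uIoo_of_le (hlt i hi).le]
    intro t ht
    exact derivWithin_of_mem_nhds (Icc_mem_nhds ht.1 ht.2)
  · rintro t ⟨ht, hts⟩
    obtain ⟨i, hi, hti⟩ := exists_partition_index p k (by rw [p0]; exact ht.1)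
      (by rw [pk]; exact ht.2) (fun i hi => hts ⟨i, hi.symm⟩)
    have hO := (hC i hi).mono Ioo_subset_Icc_self
    exact ⟨(hO.differentiableOn one_ne_zero).differentiableAt (isOpen_Ioo.mem_nhds hti),
      _, isOpen_Ioo, hti, hO.continuousOn_deriv_of_isOpen isOpen_Ioo le_rfl⟩

theorem hasDerivAt_fst {γ : ℝ → ℝ × ℝ} {t : ℝ} (h : DifferentiableAt ℝ γ t) :
    HasDerivAt (fun t => (γ t).1) (deriv γ t).1 t :=
  (ContinuousLinearMap.fst ℝ ℝ ℝ).hasFDerivAt.comp_hasDerivAt t h.hasDerivAt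

theorem hasDerivAt_snd {γ : ℝ → ℝ × ℝ} {t : ℝ} (h : DifferentiableAt ℝ γ t) :
    HasDerivAt (fun t => (γ t).2) (deriv γ t).2 t :=
  (ContinuousLinearMap.snd ℝ ℝ ℝ).hasFDerivAt.comp_hasDerivAt t h.hasDerivAt

theorem intervalIntegrable_components {f : ℝ → ℝ × ℝ} {a b : ℝ}
    (h : IntervalIntegrable f volume a b) :
    IntervalIntegrable (fun t => (f t).1) volume a b ∧
    IntervalIntegrable (fun t => (f t).2) volume a b ∧
    IntervalIntegrable (fun t => enorm2 (f t)) volume a b := by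
  have h1 : IntervalIntegrable (fun t => (f t).1) volume a b := ⟨h.1.fst, h.2.fst⟩
  have h2 : IntervalIntegrable (fun t => (f t).2) volume a b := ⟨h.1.snd, h.2.snd⟩
  refine ⟨h1, h2, ?_⟩
  refine (h1.abs.add h2.abs).mono_fun ?_ ?_
  · exact enorm2_continuous.comp_aestronglyMeasurable h.def'.aestronglyMeasurable
  · refine Eventually.of_forall fun t => ?_
    simp only [Real.norm_eq_abs, enorm2]
    rw [abs_of_nonneg (Real.sqrt_nonneg _), abs_of_nonneg (by positivity)]
    apply Real.sqrt_le_iff.2 ⟨by positivity, ?_⟩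
    have := mul_nonneg (abs_nonneg (f t).1) (abs_nonneg (f t).2)
    nlinarith [sq_abs (f t).1, sq_abs (f t).2]

/-- An exact one-form does not contribute to the length of a closed curve. -/
theorem randersLengthExact_eq {τ : ℝ × ℝ → ℝ} (hτ : ContDiff ℝ 1 τ) {γ : ℝ → ℝ × ℝ}
    (h : IsAdmissible γ) :
    randersLengthExact τ γ = ∫ t in (0 : ℝ)..(2 * Real.pi), enorm2 (deriv γ t) := by
  obtain ⟨hint, s, hs, hreg⟩ := h.regularity
  obtain ⟨i1, i2, iw⟩ := intervalIntegrable_components hint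
  have hpi : (0 : ℝ) ≤ 2 * Real.pi := by positivity
  have hcf : ∀ v : ℝ × ℝ, ContinuousOn (fun t => fderiv ℝ τ (γ t) v) (uIcc 0 (2 * Real.pi)) := by
    intro v
    rw [uIcc_of_le hpi]
    have hc : Continuous fun x => fderiv ℝ τ x v :=
      (hτ.continuous_fderiv one_ne_zero).clm_apply continuous_const
    exact hc.comp_continuousOn h.1
  have ig : IntervalIntegrable (fun t => (grad2 τ (γ t)).1 * (deriv γ t).1
      + (grad2 τ (γ t)).2 * (deriv γ t).2) volume 0 (2 * Real.pi) :=
    (i1.continuousOn_mul (hcf (1, 0))).add (i2.continuousOn_mul (hcf (0, 1)))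
  unfold randersLengthExact
  rw [intervalIntegral.integral_add iw ig,
    integral_eq_of_hasDerivAt_off_countable_of_le (fun t => τ (γ t)) _ hpi hs
      (hτ.continuous.comp_continuousOn h.1) _ ig, h.2.1]
  · ring
  · intro t ht
    have hd := ((hτ.differentiable one_ne_zero) (γ t)).hasFDerivAt.comp_hasDerivAt t
      (hreg t ht).1.hasDerivAt
    refine hd.congr_deriv ?_
    have hv : deriv γ t = (deriv γ t).1 • ((1, 0) : ℝ × ℝ) + (deriv γ t).2 • ((0, 1) : ℝ × ℝ) := by
      ext <;> simp
    conv_lhs => rw [hv]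
    rw [map_add, map_smul, map_smul]
    simp only [grad2, smul_eq_mul]
    ring

/-! ### The isoperimetric inequality -/

theorem exists_unit_parallel (d : ℝ × ℝ) :
    ∃ e : ℝ × ℝ, e.1 ^ 2 + e.2 ^ 2 = 1 ∧ -e.2 * d.1 + e.1 * d.2 = 0 := by
  by_cases hd : d.1 ^ 2 + d.2 ^ 2 = 0
  · refine ⟨(1, 0), by norm_num, ?_⟩
    have : d.2 = 0 := by nlinarith [sq_nonneg d.1, sq_nonneg d.2]
    simp [this]
  · have hn : 0 < d.1 ^ 2 + d.2 ^ 2 := lt_of_le_of_ne (by positivity) (Ne.symm hd)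
    have hq := Real.sq_sqrt hn.le
    have hp := Real.sqrt_pos.2 hn
    set r := Real.sqrt (d.1 ^ 2 + d.2 ^ 2)
    refine ⟨(d.1 / r, d.2 / r), ?_, ?_⟩
    · simp only [div_pow, hq]; field_simp
    · simp only; ring

/-- The isoperimetric inequality, for curves of length `2πa`. -/
theorem isoperimetric {γ : ℝ → ℝ × ℝ} (h : IsAdmissible γ) {a : ℝ} (ha : 0 < a)
    (hL : ∫ t in (0 : ℝ)..(2 * Real.pi), enorm2 (deriv γ t) = 2 * Real.pi * a) :
    signedArea γ ≤ Real.pi * a ^ 2 := by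
  obtain ⟨hint, s, hs, hreg⟩ := h.regularity
  obtain ⟨i1, i2, iw⟩ := intervalIntegrable_components hint
  have hpi : (0 : ℝ) ≤ 2 * Real.pi := by positivity
  set w : ℝ → ℝ := fun t => enorm2 (deriv γ t) with hwdef
  have hw : ∀ t, 0 ≤ w t := fun t => Real.sqrt_nonneg _
  have hw2 : ∀ t, w t ^ 2 = (deriv γ t).1 ^ 2 + (deriv γ t).2 ^ 2 := fun t =>
    Real.sq_sqrt (by positivity)
  set σ : ℝ → ℝ := fun t => ∫ r in (0 : ℝ)..t, w r with hσdef
  have hσc : ContinuousOn σ (Icc 0 (2 * Real.pi)) := by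
    have := intervalIntegral.continuousOn_primitive_interval (μ := volume) (f := w)
      (a := 0) (b := 2 * Real.pi)
      (by rw [uIcc_of_le hpi, integrableOn_Icc_iff_integrableOn_Ioc]; exact iw.1)
    rwa [uIcc_of_le hpi] at this
  have iwsub : ∀ u v, 0 ≤ u → u ≤ v → v ≤ 2 * Real.pi → uIcc u v ⊆ uIcc 0 (2 * Real.pi) := by
    intro u v h0 huv hv
    rw [uIcc_of_le huv, uIcc_of_le hpi]; exact Icc_subset_Icc h0 hv
  have hσ0 : σ 0 = 0 := by simp [hσdef]
  have hσ1 : σ (2 * Real.pi) = 2 * Real.pi * a := hL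
  have hσm : ∀ u v, 0 ≤ u → u ≤ v → v ≤ 2 * Real.pi → σ u ≤ σ v := by
    intro u v h0 huv hv
    have := intervalIntegral.integral_add_adjacent_intervals
      (iw.mono_set (iwsub 0 u le_rfl h0 (huv.trans hv))) (iw.mono_set (iwsub u v h0 huv hv))
    have h2 : 0 ≤ ∫ r in u..v, w r := intervalIntegral.integral_nonneg huv (fun r _ => hw r)
    simp only [hσdef]; linarith
  have hσ' : ∀ t ∈ Ioo 0 (2 * Real.pi) \ s, HasDerivAt σ (w t) t := by
    intro t ht
    obtain ⟨-, U, hU, htU, hc⟩ := hreg t ht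
    have hcw : ContinuousOn w U := enorm2_continuous.comp_continuousOn hc
    exact intervalIntegral.integral_hasDerivAt_right
      (iw.mono_set (iwsub 0 t le_rfl ht.1.1.le ht.1.2.le))
      (hcw.stronglyMeasurableAtFilter hU t htU) (hcw.continuousAt (hU.mem_nhds htU))
  obtain ⟨T, hT, hσT⟩ : Real.pi * a ∈ σ '' Icc 0 (2 * Real.pi) := by
    apply intermediate_value_Icc hpi hσc
    rw [hσ0, hσ1]
    constructor <;> nlinarith [mul_pos Real.pi_pos ha]
  obtain ⟨e, he, heT⟩ := exists_unit_parallel (γ T - γ 0)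
  set P := γ 0 with hP
  -- Coordinates in the orthonormal frame `e = (e.1, e.2)`, `(-e.2, e.1)` with origin `P`.
  set x : ℝ → ℝ := fun t => e.1 * ((γ t).1 - P.1) + e.2 * ((γ t).2 - P.2) with hx
  set y : ℝ → ℝ := fun t => -e.2 * ((γ t).1 - P.1) + e.1 * ((γ t).2 - P.2) with hy
  set x' : ℝ → ℝ := fun t => e.1 * (deriv γ t).1 + e.2 * (deriv γ t).2 with hx'
  set y' : ℝ → ℝ := fun t => -e.2 * (deriv γ t).1 + e.1 * (deriv γ t).2 with hy'
  have hγ1 : ContinuousOn (fun t => (γ t).1) (Icc 0 (2 * Real.pi)) :=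
    continuous_fst.comp_continuousOn h.1
  have hγ2 : ContinuousOn (fun t => (γ t).2) (Icc 0 (2 * Real.pi)) :=
    continuous_snd.comp_continuousOn h.1
  have hxc : ContinuousOn x (Icc 0 (2 * Real.pi)) := by fun_prop
  have hyc : ContinuousOn y (Icc 0 (2 * Real.pi)) := by fun_prop
  have hxd : ∀ t ∈ Ioo 0 (2 * Real.pi) \ s, HasDerivAt x (x' t) t := fun t ht =>
    (((hasDerivAt_fst (hreg t ht).1).sub_const _).const_mul _).add
      (((hasDerivAt_snd (hreg t ht).1).sub_const _).const_mul _)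
  have hyd : ∀ t ∈ Ioo 0 (2 * Real.pi) \ s, HasDerivAt y (y' t) t := fun t ht =>
    (((hasDerivAt_fst (hreg t ht).1).sub_const _).const_mul _).add
      (((hasDerivAt_snd (hreg t ht).1).sub_const _).const_mul _)
  have ix : IntervalIntegrable x' volume 0 (2 * Real.pi) :=
    (i1.const_mul _).add (i2.const_mul _)
  have iy : IntervalIntegrable y' volume 0 (2 * Real.pi) :=
    (i1.const_mul _).add (i2.const_mul _)
  have hy0 : y 0 = 0 := by simp [hy, hP]
  have hyT : y T = 0 := heT
  have hclosed : γ (2 * Real.pi) = P := h.2.1.symm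
  have hy1 : y (2 * Real.pi) = 0 := by simp [hy, hclosed]
  have hxy : ∀ t, (-x' t) ^ 2 + y' t ^ 2 ≤ w t ^ 2 := by
    intro t
    rw [hw2]
    apply le_of_eq
    simp only [hx', hy']
    linear_combination ((deriv γ t).1 ^ 2 + (deriv γ t).2 ^ 2) * he
  have arc : ∀ u v, 0 ≤ u → u ≤ v → v ≤ 2 * Real.pi → y u = 0 → y v = 0 →
      σ v = σ u + Real.pi * a →
      (∫ t in u..v, y t * (-x' t)) * (2 * Real.pi) ≤ (Real.pi * a) ^ 2 := by
    intro u v h0 huv hv hyu hyv hσuv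
    have hsub : Icc u v ⊆ Icc 0 (2 * Real.pi) := Icc_subset_Icc h0 hv
    have hsubo : Ioo u v \ s ⊆ Ioo 0 (2 * Real.pi) \ s :=
      sdiff_subset_sdiff_left (Ioo_subset_Ioo h0 hv)
    refine arc_bound huv hs (hyc.mono hsub) (hσc.mono hsub) (fun t ht => hyd t (hsubo ht))
      (fun t ht => hσ' t (hsubo ht)) (ix.mono_set (iwsub u v h0 huv hv)).neg
      (iy.mono_set (iwsub u v h0 huv hv)) (iw.mono_set (iwsub u v h0 huv hv)) hw hxy hyu hyv
      (mul_pos Real.pi_pos ha) rfl hσuv ?_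
    intro t ht
    exact ⟨hσm u t h0 ht.1 (ht.2.trans hv), hσuv ▸ hσm t v (h0.trans ht.1) ht.2 hv⟩
  have A1 := arc 0 T le_rfl hT.1 hT.2 hy0 hyT (by rw [hσ0, hσT]; ring)
  have A2 := arc T (2 * Real.pi) hT.1 hT.2 le_rfl hyT hy1 (by rw [hσ1, hσT]; ring)
  have iyx : IntervalIntegrable (fun t => y t * (-x' t)) volume 0 (2 * Real.pi) := by
    apply ix.neg.continuousOn_mul; rwa [uIcc_of_le hpi]
  have hsum := intervalIntegral.integral_add_adjacent_intervals
      (iyx.mono_set (iwsub 0 T le_rfl hT.1 hT.2)) (iyx.mono_set (iwsub T _ hT.1 hT.2 le_rfl))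
  -- The area integrand differs from `-2 y x'` by the derivative of `x y + P × γ`.
  set H : ℝ → ℝ := fun t => x t * y t + (P.1 * (γ t).2 - P.2 * (γ t).1) with hH
  set H' : ℝ → ℝ := fun t => (x' t * y t + x t * y' t)
    + (P.1 * (deriv γ t).2 - P.2 * (deriv γ t).1) with hH'
  have hHc : ContinuousOn H (Icc 0 (2 * Real.pi)) := by fun_prop
  have iH' : IntervalIntegrable H' volume 0 (2 * Real.pi) := by
    refine IntervalIntegrable.add (IntervalIntegrable.add ?_ ?_)
      ((i2.const_mul _).sub (i1.const_mul _))
    · apply ix.mul_continuousOn; rwa [uIcc_of_le hpi]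
    · apply iy.continuousOn_mul; rwa [uIcc_of_le hpi]
  have eH : ∫ t in (0 : ℝ)..(2 * Real.pi), H' t = 0 := by
    rw [integral_eq_of_hasDerivAt_off_countable_of_le H H' hpi hs hHc _ iH']
    · simp [hH, hy0, hy1, hclosed, ← hP]
    · intro t ht
      exact ((hxd t ht).mul (hyd t ht)).add
        (((hasDerivAt_snd (hreg t ht).1).const_mul _).sub
          ((hasDerivAt_fst (hreg t ht).1).const_mul _))
  have hA : signedArea γ = ∫ t in (0 : ℝ)..(2 * Real.pi), y t * (-x' t) := by
    have : ∀ t, (γ t).1 * (deriv γ t).2 - (γ t).2 * (deriv γ t).1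
        = H' t + 2 * (y t * (-x' t)) := by
      intro t
      simp only [hH', hx, hy, hx', hy']
      linear_combination (-(((γ t).1 - P.1) * (deriv γ t).2
        - ((γ t).2 - P.2) * (deriv γ t).1)) * he
    unfold signedArea
    simp only [this]
    rw [intervalIntegral.integral_add iH' (iyx.const_mul 2), eH,
      intervalIntegral.integral_const_mul]
    ring
  rw [hA, ← hsum]
  have hp := Real.pi_pos
  refine le_of_mul_le_mul_right ?_ (show 0 < 2 * Real.pi by positivity)
  nlinarith

/-! ### The circle -/

theorem hasDerivAt_circle (a t : ℝ) :
    HasDerivAt (fun t : ℝ => (a * Real.cos t, a * Real.sin t))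
      (a * -Real.sin t, a * Real.cos t) t :=
  ((Real.hasDerivAt_cos t).const_mul a).prodMk ((Real.hasDerivAt_sin t).const_mul a)

theorem isAdmissible_circle (a : ℝ) :
    IsAdmissible (fun t => (a * Real.cos t, a * Real.sin t)) := by
  have hC : ContDiff ℝ 1 (fun t : ℝ => (a * Real.cos t, a * Real.sin t)) := by fun_prop
  refine ⟨hC.continuous.continuousOn, by simp, 1, fun i => i * (2 * Real.pi), one_pos, by simp,
    by simp, ?_, fun i _ => hC.contDiffOn⟩
  intro i _
  have := Real.pi_pos
  push_cast
  nlinarith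

theorem circle_strong_local_max_randers_exact_form
    (τ : ℝ × ℝ → ℝ) (k a : ℝ) (hτ : ContDiff ℝ (⊤ : ℕ∞) τ) (hk : k < 1)
    (hgrad : ∀ x : ℝ × ℝ, enorm2 (grad2 τ x) = k) (ha : 0 < a) :
    ∃ ε : ℝ, 0 < ε ∧
      signedArea (fun t => (a * Real.cos t, a * Real.sin t)) = Real.pi * a ^ 2 ∧
      ∀ γ : ℝ → ℝ × ℝ, IsAdmissible γ →
        (∀ t ∈ Set.Icc (0 : ℝ) (2 * Real.pi),
          enorm2 (γ t - (a * Real.cos t, a * Real.sin t)) < ε) →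
        randersLengthExact τ γ
          = randersLengthExact τ (fun t => (a * Real.cos t, a * Real.sin t)) →
        signedArea γ ≤ signedArea (fun t => (a * Real.cos t, a * Real.sin t)) := by
  have hτ1 : ContDiff ℝ 1 τ := hτ.of_le (by exact_mod_cast le_top)
  have hA : signedArea (fun t => (a * Real.cos t, a * Real.sin t)) = Real.pi * a ^ 2 := by
    have : ∀ t, a * Real.cos t * (a * Real.cos t) - a * Real.sin t * (a * -Real.sin t) = a ^ 2 := by
      intro t
      linear_combination a ^ 2 * Real.sin_sq_add_cos_sq t
    simp only [signedArea, (hasDerivAt_circle a _).deriv, this]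
    rw [intervalIntegral.integral_const, smul_eq_mul]
    ring
  refine ⟨1, one_pos, hA, fun γ hγ _ hL => ?_⟩
  rw [hA]
  apply isoperimetric hγ ha
  rw [← randersLengthExact_eq hτ1 hγ, hL, randersLengthExact_eq hτ1 (isAdmissible_circle a)]
  have : ∀ t, enorm2 (a * -Real.sin t, a * Real.cos t) = a := by
    intro t
    rw [enorm2, show (a * -Real.sin t) ^ 2 + (a * Real.cos t) ^ 2 = a ^ 2 by
      linear_combination a ^ 2 * Real.sin_sq_add_cos_sq t]
    exact Real.sqrt_sq ha.le
  simp only [(hasDerivAt_circle a _).deriv, this]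
  rw [intervalIntegral.integral_const, smul_eq_mul]
  ring
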